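/- arXiv:2504.17245 — 6 statements merged into one kernel-verified Lean document; each statement's English description precedes it below -/
import Mathlib

section
/- For every integer r ≥ 1, the identity ∑_{t=1}^{r} ∏_{k=1}^{t} ((y − x^{k−1})(x^{r+1−k} − 1))/(x^{k} − 1) = y^{r} − 1 holds in K. -/
/-- `K = ℚ(x, y)`, the field of rational functions in two independent
indeterminates over `ℚ`. -/
noncomputable abbrev K : Type := FractionRing (MvPolynomial (Fin 2) ℚ)

/-- The indeterminate `x` viewed inside `K`. -/
noncomputable def X : K := algebraMap (MvPolynomial (Fin 2) ℚ) K (MvPolynomial.X 0)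

/-- The indeterminate `y` viewed inside `K`. -/
noncomputable def Y : K := algebraMap (MvPolynomial (Fin 2) ℚ) K (MvPolynomial.X 1)

/-!
The factors `(x ^ (r + 1 - k) - 1) / (x ^ k - 1)` with `1 ≤ k ≤ t` multiply to the Gaussian binomial
coefficient `[r, t]` at `q = x`. The identity is therefore the Cauchy binomial theorem
`∑ t, [r, t] * ∏ j < t, (y - q ^ j) = y ^ r` with its `t = 0` term moved to the right. The latter
follows by induction on `r` from the `q`-Pascal rule: the summand `q ^ t * [r, t]` of
`[r + 1, t]` cancels the `q ^ t` in the factor `y - q ^ t` contributed by `[r, t]`.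
-/

/-- The Gaussian binomial coefficient `[n, k]` at `q`, defined by the `q`-Pascal rule so that it
makes sense for every `q`, including roots of unity, where the quotient formula breaks down. -/
def qBinom {R : Type*} [Semiring R] (q : R) : ℕ → ℕ → R
  | _, 0 => 1
  | 0, _ + 1 => 0
  | n + 1, k + 1 => qBinom q n k + q ^ (k + 1) * qBinom q n (k + 1)

section Semiring

variable {R : Type*} [Semiring R] (q : R)

theorem qBinom_zero_right (n : ℕ) : qBinom q n 0 = 1 := by
  cases n <;> rfl

theorem qBinom_succ_succ (n k : ℕ) :
    qBinom q (n + 1) (k + 1) = qBinom q n k + q ^ (k + 1) * qBinom q n (k + 1) :=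
  rfl

theorem qBinom_eq_zero_of_lt {n k : ℕ} (h : n < k) : qBinom q n k = 0 := by
  induction n generalizing k with
  | zero =>
    obtain ⟨k, rfl⟩ := Nat.exists_eq_add_one_of_ne_zero h.ne'
    rfl
  | succ n ih =>
    obtain ⟨k, rfl⟩ := Nat.exists_eq_add_one_of_ne_zero (Nat.ne_zero_of_lt h)
    have hnk : n < k := Nat.lt_of_succ_lt_succ h
    rw [qBinom_succ_succ, ih hnk, ih (hnk.trans k.lt_succ_self), mul_zero, add_zero]

end Semiring

section CommRing

variable {R : Type*} [CommRing R]

theorem qBinom_succ_right_mul (q : R) (n k : ℕ) :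
    qBinom q n (k + 1) * (q ^ (k + 1) - 1) = qBinom q n k * (q ^ (n - k) - 1) := by
  induction n generalizing k with
  | zero => rw [qBinom_eq_zero_of_lt q k.succ_pos, Nat.zero_sub, pow_zero, sub_self, mul_zero,
      zero_mul]
  | succ n ih =>
    cases k with
    | zero =>
      have h := ih 0
      simp only [qBinom_succ_succ, qBinom_zero_right, Nat.sub_zero] at h ⊢
      linear_combination q * h
    | succ k =>
      rw [Nat.add_sub_add_right]
      obtain hnk | hkn := le_or_gt n k
      · rw [qBinom_eq_zero_of_lt q (by omega : n + 1 < k + 1 + 1), Nat.sub_eq_zero_of_le hnk,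
          pow_zero, sub_self, mul_zero, zero_mul]
      · have pow_sub_succ : q ^ (n - k) = q * q ^ (n - (k + 1)) := by
          rw [← pow_succ']
          congr 1
          omega
        have ih_k := ih k
        rw [pow_sub_succ] at ih_k ⊢
        rw [qBinom_succ_succ, qBinom_succ_succ]
        linear_combination q ^ (k + 2) * ih (k + 1) + ih_k

theorem sum_qBinom_mul_prod_sub_pow (q y : R) (n : ℕ) :
    ∑ t ∈ Finset.range (n + 1), qBinom q n t * ∏ j ∈ Finset.range t, (y - q ^ j) = y ^ n := by
  induction n with
  | zero => simp [qBinom_zero_right]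
  | succ n ih =>
    set P : ℕ → R := fun t ↦ ∏ j ∈ Finset.range t, (y - q ^ j)
    have P_succ (t : ℕ) : P (t + 1) = P t * (y - q ^ t) := Finset.prod_range_succ _ t
    have pascal_sum : ∑ t ∈ Finset.range (n + 2), qBinom q (n + 1) t * P t =
        ∑ t ∈ Finset.range (n + 1), qBinom q n t * P (t + 1) +
          ∑ t ∈ Finset.range (n + 2), q ^ t * qBinom q n t * P t := by
      rw [Finset.sum_range_succ', Finset.sum_range_succ' _ (n + 1), ← add_assoc,
        ← Finset.sum_add_distrib]
      simp only [qBinom_succ_succ, qBinom_zero_right, add_mul, pow_zero, one_mul]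
    have last_eq_zero : q ^ (n + 1) * qBinom q n (n + 1) * P (n + 1) = 0 := by
      rw [qBinom_eq_zero_of_lt q n.lt_succ_self, mul_zero, zero_mul]
    calc ∑ t ∈ Finset.range (n + 2), qBinom q (n + 1) t * P t
        = ∑ t ∈ Finset.range (n + 1), qBinom q n t * P (t + 1) +
            ∑ t ∈ Finset.range (n + 1), q ^ t * qBinom q n t * P t := by
          rw [pascal_sum, Finset.sum_range_succ _ (n + 1), last_eq_zero, add_zero]
      _ = ∑ t ∈ Finset.range (n + 1), qBinom q n t * P t * y := by
          rw [← Finset.sum_add_distrib]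
          refine Finset.sum_congr rfl fun t _ ↦ ?_
          rw [P_succ]
          ring
      _ = y ^ (n + 1) := by
          rw [← Finset.sum_mul, ih, pow_succ]

end CommRing

section Field

variable {F : Type*} [Field F] {x : F}

theorem prod_pow_sub_one_div_eq_qBinom (n t : ℕ)
    (hx : ∀ k ∈ Finset.Icc 1 t, x ^ k ≠ 1) :
    ∏ k ∈ Finset.Icc 1 t, (x ^ (n + 1 - k) - 1) / (x ^ k - 1) = qBinom x n t := by
  induction t with
  | zero => simp [qBinom_zero_right]
  | succ t ih =>
    have hxt : x ^ (t + 1) - 1 ≠ 0 := sub_ne_zero.2 (hx _ (by simp))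
    have hx' : ∀ k ∈ Finset.Icc 1 t, x ^ k ≠ 1 :=
      fun k hk ↦ hx k (Finset.Icc_subset_Icc_right t.le_succ hk)
    rw [Finset.prod_Icc_succ_top (Nat.le_add_left 1 t), ih hx', Nat.add_sub_add_right,
      ← mul_div_assoc, ← qBinom_succ_right_mul, mul_div_cancel_right₀ _ hxt]

theorem prod_sub_pow_mul_pow_sub_one_div_eq_qBinom_mul (y : F) (n t : ℕ)
    (hx : ∀ k ∈ Finset.Icc 1 t, x ^ k ≠ 1) :
    ∏ k ∈ Finset.Icc 1 t, ((y - x ^ (k - 1)) * (x ^ (n + 1 - k) - 1)) / (x ^ k - 1) =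
      qBinom x n t * ∏ j ∈ Finset.range t, (y - x ^ j) := by
  have shift : ∏ k ∈ Finset.Icc 1 t, (y - x ^ (k - 1)) = ∏ j ∈ Finset.range t, (y - x ^ j) := by
    simp [← Finset.Ico_add_one_right_eq_Icc, Finset.prod_Ico_eq_prod_range]
  simp only [mul_div_assoc]
  rw [Finset.prod_mul_distrib, shift, prod_pow_sub_one_div_eq_qBinom n t hx, mul_comm]

theorem sum_prod_identity_general (y : F) (r : ℕ) (hx : ∀ k ∈ Finset.Icc 1 r, x ^ k ≠ 1) :
    ∑ t ∈ Finset.Icc 1 r, ∏ k ∈ Finset.Icc 1 t,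
      ((y - x ^ (k - 1)) * (x ^ (r + 1 - k) - 1)) / (x ^ k - 1)
      = y ^ r - 1 := by
  have hx_of_mem (t : ℕ) (ht : t ∈ Finset.Icc 1 r) : ∀ k ∈ Finset.Icc 1 t, x ^ k ≠ 1 :=
    fun k hk ↦ hx k (Finset.Icc_subset_Icc_right (Finset.mem_Icc.1 ht).2 hk)
  calc ∑ t ∈ Finset.Icc 1 r, ∏ k ∈ Finset.Icc 1 t,
        ((y - x ^ (k - 1)) * (x ^ (r + 1 - k) - 1)) / (x ^ k - 1)
      = ∑ t ∈ Finset.Icc 1 r, qBinom x r t * ∏ j ∈ Finset.range t, (y - x ^ j) :=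
        Finset.sum_congr rfl fun t ht ↦
          prod_sub_pow_mul_pow_sub_one_div_eq_qBinom_mul y r t (hx_of_mem t ht)
    _ = ∑ t ∈ Finset.range (r + 1), qBinom x r t * ∏ j ∈ Finset.range t, (y - x ^ j) - 1 := by
        rw [Finset.sum_range_eq_add_Ico _ (Nat.add_one_pos r), Finset.Ico_add_one_right_eq_Icc,
          qBinom_zero_right, Finset.prod_range_zero, one_mul, add_sub_cancel_left]
    _ = y ^ r - 1 := by rw [sum_qBinom_mul_prod_sub_pow]

end Field

theorem pow_ne_one_of_transcendental {R A : Type*} [CommRing R] [Nontrivial R] [Ring A]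
    [Algebra R A] {a : A} (ha : Transcendental R a) {n : ℕ} (hn : 0 < n) : a ^ n ≠ 1 :=
  fun h ↦ ha.pow hn (h ▸ isAlgebraic_one)

theorem transcendental_X : Transcendental ℚ X :=
  (transcendental_algebraMap_iff (IsFractionRing.injective _ K)).2
    (MvPolynomial.transcendental_X ℚ 0)

/-- For every integer `r ≥ 1`,
`∑_{t=1}^{r} ∏_{k=1}^{t} ((y − x^{k−1})(x^{r+1−k} − 1))/(x^{k} − 1) = y^{r} − 1` in `K`. -/
theorem sum_prod_identity (r : ℕ) (hr : 1 ≤ r) :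
    ∑ t ∈ Finset.Icc 1 r, ∏ k ∈ Finset.Icc 1 t,
      ((Y - X ^ (k - 1)) * (X ^ (r + 1 - k) - 1)) / (X ^ k - 1)
      = Y ^ r - 1 :=
  sum_prod_identity_general Y r fun _ hk ↦
    pow_ne_one_of_transcendental transcendental_X (Finset.mem_Icc.1 hk).1
end

section
/- For every integer r ≥ 1, the identity ∑_{t=1}^{r} ∏_{k=1}^{t} ((x^{k−1} y − 1)(x^{r+1−k} − 1))/((x^{r−k} − y)(x^{k} − 1)) = −1 holds in K. -/
/-!
Put `a k = (x ^ k * y - 1) * (x ^ (r - k) - 1)`. The `k`-th factor of the products is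
`a (k - 1) / (a k - a 0)`, so the partial sums telescope: `a 0` times the sum over `0 ≤ t ≤ n` is
`a n` times the `n`-th product. As `a r = 0` and `a 0 ≠ 0`, the full sum vanishes, and its term
`t = 0` is `1`.
-/

section Telescoping

variable {F : Type*} [Field F]

theorem mul_one_add_sum_prod_div_sub (a : ℕ → F) (n : ℕ) (ha : ∀ k ∈ Finset.Icc 1 n, a k ≠ a 0) :
    a 0 * (1 + ∑ t ∈ Finset.Icc 1 n, ∏ k ∈ Finset.Icc 1 t, a (k - 1) / (a k - a 0)) =
      a n * ∏ k ∈ Finset.Icc 1 n, a (k - 1) / (a k - a 0) := by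
  induction n with
  | zero => simp
  | succ n ih =>
    have ih := ih fun k hk => ha k (Finset.Icc_subset_Icc_right n.le_succ hk)
    have hsub : a (n + 1) - a 0 ≠ 0 := sub_ne_zero.mpr (ha _ (by simp))
    rw [Finset.sum_Icc_succ_top (by lia), ← add_assoc, mul_add, ih,
      Finset.prod_Icc_succ_top (by lia), Nat.add_sub_cancel]
    field_simp
    ring

theorem sum_prod_div_sub_eq_neg_one {a : ℕ → F} {n : ℕ} (ha : ∀ k ∈ Finset.Icc 1 n, a k ≠ a 0)
    (h0 : a 0 ≠ 0) (hn : a n = 0) :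
    ∑ t ∈ Finset.Icc 1 n, ∏ k ∈ Finset.Icc 1 t, a (k - 1) / (a k - a 0) = -1 := by
  have hmul := mul_one_add_sum_prod_div_sub a n ha
  rw [hn, zero_mul] at hmul
  exact eq_neg_of_add_eq_zero_right ((mul_eq_zero.mp hmul).resolve_left h0)

theorem pow_mul_sub_one_mul_sub {R : Type*} [CommRing R] (x y : R) {k r : ℕ} (hk : k ≤ r) :
    (x ^ k * y - 1) * (x ^ (r - k) - 1) - (y - 1) * (x ^ r - 1) =
      (x ^ (r - k) - y) * (x ^ k - 1) := by
  rw [← pow_sub_mul_pow x hk]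
  ring

theorem sum_prod_identity_neg_one_general {x y : F} {r : ℕ} (hr : 1 ≤ r)
    (hx : ∀ k ∈ Finset.Icc 1 r, x ^ k ≠ 1) (hy : ∀ k < r, x ^ k ≠ y) :
    ∑ t ∈ Finset.Icc 1 r, ∏ k ∈ Finset.Icc 1 t,
      ((x ^ (k - 1) * y - 1) * (x ^ (r + 1 - k) - 1)) /
        ((x ^ (r - k) - y) * (x ^ k - 1))
      = -1 := by
  let a : ℕ → F := fun k => (x ^ k * y - 1) * (x ^ (r - k) - 1)
  have ha_zero : a 0 = (y - 1) * (x ^ r - 1) := by simp [a]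
  have ha_sub : ∀ k ≤ r, a k - a 0 = (x ^ (r - k) - y) * (x ^ k - 1) := fun k hk => by
    rw [ha_zero, pow_mul_sub_one_mul_sub x y hk]
  have ha_ne : ∀ k ∈ Finset.Icc 1 r, a k ≠ a 0 := fun k hk => by
    have hk' := Finset.mem_Icc.mp hk
    rw [← sub_ne_zero, ha_sub k hk'.2]
    exact mul_ne_zero (sub_ne_zero.mpr (hy _ (by lia))) (sub_ne_zero.mpr (hx k hk))
  have hy_one : y ≠ 1 := by simpa using (hy 0 hr).symm
  have ha_zero_ne : a 0 ≠ 0 := ha_zero ▸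
    mul_ne_zero (sub_ne_zero.mpr hy_one) (sub_ne_zero.mpr (hx r (Finset.right_mem_Icc.mpr hr)))
  rw [← sum_prod_div_sub_eq_neg_one ha_ne ha_zero_ne (by simp [a])]
  refine Finset.sum_congr rfl fun t ht => Finset.prod_congr rfl fun k hk => ?_
  rw [Finset.mem_Icc] at ht hk
  rw [ha_sub k (hk.2.trans ht.2), show r + 1 - k = r - (k - 1) by lia]

end Telescoping

theorem algebraMap_mvPolynomial_ne_of_eval_ne {σ R A : Type*} [CommSemiring R] [Semiring A]
    [Algebra (MvPolynomial σ R) A] [FaithfulSMul (MvPolynomial σ R) A] {p q : MvPolynomial σ R}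
    (f : σ → R) (h : MvPolynomial.eval f p ≠ MvPolynomial.eval f q) :
    algebraMap (MvPolynomial σ R) A p ≠ algebraMap (MvPolynomial σ R) A q :=
  (FaithfulSMul.algebraMap_injective _ A).ne (ne_of_apply_ne (MvPolynomial.eval f) h)

theorem X_pow_ne_one {n : ℕ} (hn : n ≠ 0) : X ^ n ≠ 1 := by
  rw [X, ← map_pow, ← map_one (algebraMap (MvPolynomial (Fin 2) ℚ) K)]
  exact algebraMap_mvPolynomial_ne_of_eval_ne 0 (by simp [hn])

theorem X_pow_ne_Y (n : ℕ) : X ^ n ≠ Y := by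
  rw [X, Y, ← map_pow]
  exact algebraMap_mvPolynomial_ne_of_eval_ne ![1, 0] (by simp)

/-- For every integer `r ≥ 1`,
`∑_{t=1}^{r} ∏_{k=1}^{t} ((x^{k−1}y − 1)(x^{r+1−k} − 1))/((x^{r−k} − y)(x^{k} − 1)) = −1`
in `K`. -/
theorem sum_prod_identity_neg_one (r : ℕ) (hr : 1 ≤ r) :
    ∑ t ∈ Finset.Icc 1 r, ∏ k ∈ Finset.Icc 1 t,
      ((X ^ (k - 1) * Y - 1) * (X ^ (r + 1 - k) - 1)) /
        ((X ^ (r - k) - Y) * (X ^ k - 1))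
      = -1 :=
  sum_prod_identity_neg_one_general hr
    (fun _ hk => X_pow_ne_one (Nat.one_le_iff_ne_zero.mp (Finset.mem_Icc.mp hk).1))
    fun k _ => X_pow_ne_Y k
end

section
/- For all integers n ≥ 1, r ≥ 1 and t with 1 ≤ t ≤ r, the identity F_t(x^{n}, r) = (x^{r} − 1)·x^{n−1}·F_{t−1}(x^{n−1}, r−1) + F_t(x^{n−1}, r) holds in ℚ(x). -/
/-- `ℚ(x)`, the field of rational functions in one indeterminate over `ℚ`. -/
noncomputable abbrev Qx : Type := RatFunc ℚ

/-- `F_t(z, r) = ∏_{k=1}^{t} ((z − x^{k−1})(x^{r+1−k} − 1))/(x^{k} − 1)`,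
with the convention `F_0(z, r) = 1` (empty product). -/
noncomputable def F (t : ℕ) (z : Qx) (r : ℕ) : Qx :=
  ∏ k ∈ Finset.Icc 1 t,
    ((z - RatFunc.X ^ (k - 1)) * (RatFunc.X ^ (r + 1 - k) - 1)) / (RatFunc.X ^ k - 1)

/-!
`F t z r` is the Gaussian binomial coefficient `[r choose t]` in base `x` times
`P_t(z) = ∏_{k<t} (z - x^k)`. The operator `f(z) ↦ f(xz) - f(z)` sends `P_{t+1}` to
`(x^{t+1} - 1) z P_t`, and the absorption identity
`(x^{t+1} - 1) [r+1 choose t+1] = (x^{r+1} - 1) [r choose t]` turns the resulting factor into the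
coefficient of the recursion.
-/

section ShiftedPower

variable {R : Type*} [CommRing R]

/-- The `q`-analogue `(z - 1)(z - q)⋯(z - q^(t-1))` of the power `(z - 1)^t`. -/
def qShiftedPow (q z : R) (t : ℕ) : R :=
  ∏ k ∈ Finset.range t, (z - q ^ k)

theorem qShiftedPow_succ (q z : R) (t : ℕ) :
    qShiftedPow q z (t + 1) = qShiftedPow q z t * (z - q ^ t) :=
  Finset.prod_range_succ _ _

theorem qShiftedPow_mul_succ (q z : R) (t : ℕ) :
    qShiftedPow q (q * z) (t + 1) = q ^ t * qShiftedPow q z t * (q * z - 1) := by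
  simp only [qShiftedPow, Finset.prod_range_succ', pow_succ', ← mul_sub, Finset.prod_mul_distrib,
    Finset.prod_const, Finset.card_range, pow_zero]

theorem qShiftedPow_mul_succ_sub (q z : R) (t : ℕ) :
    qShiftedPow q (q * z) (t + 1) - qShiftedPow q z (t + 1)
      = (q ^ (t + 1) - 1) * z * qShiftedPow q z t := by
  rw [qShiftedPow_mul_succ, qShiftedPow_succ]
  ring

end ShiftedPower

section GaussianBinomial

variable {K : Type*} [Field K]

/-- The Gaussian binomial coefficient `[r choose t]` in base `q`, as a product of quotients, which
presupposes `q^k ≠ 1` for `1 ≤ k ≤ t`. The truncation of `r - k` is harmless: when `t > r`, the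
factor at `k = r` is zero. -/
def gaussBinom (q : K) (r t : ℕ) : K :=
  ∏ k ∈ Finset.range t, (q ^ (r - k) - 1) / (q ^ (k + 1) - 1)

theorem gaussBinom_succ_succ_mul {q : K} {t : ℕ} (hq : q ^ (t + 1) ≠ 1) (r : ℕ) :
    gaussBinom q (r + 1) (t + 1) * (q ^ (t + 1) - 1) = (q ^ (r + 1) - 1) * gaussBinom q r t := by
  have hq' : q ^ (t + 1) - 1 ≠ 0 := sub_ne_zero.mpr hq
  simp only [gaussBinom, Finset.prod_div_distrib]
  rw [Finset.prod_range_succ' (fun k ↦ q ^ (r + 1 - k) - 1),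
    Finset.prod_range_succ (fun k ↦ q ^ (k + 1) - 1)]
  simp only [Nat.add_sub_add_right, Nat.sub_zero]
  rw [← div_div, div_mul_cancel₀ _ hq', mul_comm, mul_div_assoc]

theorem F_recursion_general {q : K} (hq : ¬IsOfFinOrder q) (z : K) (r t : ℕ) :
    gaussBinom q (r + 1) (t + 1) * qShiftedPow q (q * z) (t + 1)
      = (q ^ (r + 1) - 1) * z * (gaussBinom q r t * qShiftedPow q z t)
        + gaussBinom q (r + 1) (t + 1) * qShiftedPow q z (t + 1) := by
  have hqt : q ^ (t + 1) ≠ 1 := fun h ↦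
    hq (isOfFinOrder_iff_pow_eq_one.mpr ⟨t + 1, t.succ_pos, h⟩)
  rw [← sub_eq_iff_eq_add, ← mul_sub]
  calc gaussBinom q (r + 1) (t + 1) * (qShiftedPow q (q * z) (t + 1) - qShiftedPow q z (t + 1))
      = gaussBinom q (r + 1) (t + 1) * (q ^ (t + 1) - 1) * (z * qShiftedPow q z t) := by
        rw [qShiftedPow_mul_succ_sub]; ring
    _ = (q ^ (r + 1) - 1) * z * (gaussBinom q r t * qShiftedPow q z t) := by
        rw [gaussBinom_succ_succ_mul hqt]; ring

end GaussianBinomial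

theorem not_isOfFinOrder_of_transcendental {R A : Type*} [CommRing R] [Nontrivial R] [Ring A]
    [Algebra R A] {a : A} (ha : Transcendental R a) : ¬IsOfFinOrder a := by
  rw [isOfFinOrder_iff_pow_eq_one]
  rintro ⟨n, hn, hpow⟩
  exact ha (.of_pow hn (hpow ▸ isAlgebraic_one))

theorem ratFunc_X_not_isOfFinOrder (K : Type*) [Field K] : ¬IsOfFinOrder (RatFunc.X : RatFunc K) :=
  not_isOfFinOrder_of_transcendental RatFunc.transcendental_X

theorem F_eq_gaussBinom_mul_qShiftedPow (t : ℕ) (z : Qx) (r : ℕ) :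
    F t z r = gaussBinom RatFunc.X r t * qShiftedPow RatFunc.X z t := by
  rw [F, gaussBinom, qShiftedPow, ← Finset.prod_mul_distrib, ← Finset.Ico_add_one_right_eq_Icc,
    Finset.prod_Ico_eq_prod_range]
  refine Finset.prod_congr (by simp) fun k _ ↦ ?_
  rw [add_comm 1 k, Nat.add_sub_cancel, Nat.add_sub_add_right, mul_comm, mul_div_right_comm]

/-- For all integers `n ≥ 1`, `r ≥ 1` and `1 ≤ t ≤ r`,
`F_t(x^n, r) = (x^r − 1)·x^{n−1}·F_{t−1}(x^{n−1}, r−1) + F_t(x^{n−1}, r)` in `ℚ(x)`. -/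
theorem F_recursion (n r t : ℕ) (hn : 1 ≤ n) (hr : 1 ≤ r) (ht1 : 1 ≤ t) (htr : t ≤ r) :
    F t (RatFunc.X ^ n) r
      = (RatFunc.X ^ r - 1) * RatFunc.X ^ (n - 1) * F (t - 1) (RatFunc.X ^ (n - 1)) (r - 1)
        + F t (RatFunc.X ^ (n - 1)) r := by
  obtain ⟨n, rfl⟩ := Nat.exists_eq_add_of_le' hn
  obtain ⟨r, rfl⟩ := Nat.exists_eq_add_of_le' hr
  obtain ⟨t, rfl⟩ := Nat.exists_eq_add_of_le' ht1
  simp only [F_eq_gaussBinom_mul_qShiftedPow, Nat.add_sub_cancel, pow_succ' _ n]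
  exact F_recursion_general (ratFunc_X_not_isOfFinOrder ℚ) (RatFunc.X ^ n) r t
end

section
/- For every integer r ≥ 0, the identity ∑_{t=0}^{r} ((y; x^{−1})_t · (x^{r}; x^{−1})_t / (x^{−1}; x^{−1})_t) · x^{−t} = y^{r} holds in K. -/
/-- The `q`-Pochhammer symbol `(a; q)_t = ∏_{i=1}^{t} (1 − a q^{i−1})`,
with `(a; q)_0 = 1`. -/
noncomputable def qPoch (a q : K) (t : ℕ) : K :=
  ∏ i ∈ Finset.Icc 1 t, (1 - a * q ^ (i - 1))

/-!
With `q = x⁻¹`, `a = y` and `b = q⁻ʳ` the sum is the terminating series `₂φ₁(a, b; 0; q, q)`. For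
arbitrary `b`, its terms with parameter `b` are, after a shift of the index, `a` times its terms
with parameter `b * q`, up to the difference of consecutive values of
`(a; q)_t (b q; q)_t / (q; q)_t`. Summation therefore leaves a single boundary value, which vanishes
for `b = q⁻⁽ʳ⁺¹⁾` and `t = r + 1`, and each step from `q⁻⁽ʳ⁺¹⁾` to `q⁻ʳ` contributes one factor `a`.
-/

section CommRing

variable {R : Type*} [CommRing R]

/-- The `q`-Pochhammer symbol `(a; q)_t` in an arbitrary commutative ring, with the factors indexed
from `0`. -/
def qPochhammer (a q : R) (t : ℕ) : R :=
  ∏ i ∈ Finset.range t, (1 - a * q ^ i)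

@[simp]
theorem qPochhammer_zero (a q : R) : qPochhammer a q 0 = 1 :=
  Finset.prod_range_zero _

theorem qPochhammer_succ (a q : R) (t : ℕ) :
    qPochhammer a q (t + 1) = qPochhammer a q t * (1 - a * q ^ t) :=
  Finset.prod_range_succ _ t

theorem qPochhammer_succ' (a q : R) (t : ℕ) :
    qPochhammer a q (t + 1) = (1 - a) * qPochhammer (a * q) q t := by
  simp only [qPochhammer, Finset.prod_range_succ', pow_succ', pow_zero, mul_one, mul_assoc]
  exact mul_comm _ _

theorem qPochhammer_succ_eq_zero {a q : R} {t : ℕ} (h : a * q ^ t = 1) :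
    qPochhammer a q (t + 1) = 0 := by
  rw [qPochhammer_succ, h, sub_self, mul_zero]

end CommRing

section Field

variable {F : Type*} [Field F]

/-- The `t`-th term of the basic hypergeometric series `₂φ₁(a, b; 0; q, q)`. -/
def qHypergeometricTerm (a b q : F) (t : ℕ) : F :=
  qPochhammer a q t * qPochhammer b q t / qPochhammer q q t * q ^ t

theorem qHypergeometricTerm_zero (a b q : F) : qHypergeometricTerm a b q 0 = 1 := by
  simp [qHypergeometricTerm]

theorem qHypergeometricTerm_succ (a b : F) {q : F} {t : ℕ} (hq : q ^ (t + 1) ≠ 1) :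
    qHypergeometricTerm a b q (t + 1) =
      a * qHypergeometricTerm a (b * q) q t +
        (qPochhammer a q (t + 1) * qPochhammer (b * q) q (t + 1) / qPochhammer q q (t + 1) -
          qPochhammer a q t * qPochhammer (b * q) q t / qPochhammer q q t) := by
  have hq' : 1 - q * q ^ t ≠ 0 := by rwa [← pow_succ', sub_ne_zero, ne_comm]
  have key : (1 - b) * q ^ (t + 1) / (1 - q * q ^ t) =
      (1 - b * q * q ^ t) / (1 - q * q ^ t) - 1 := by
    field_simp
    ring
  simp only [qHypergeometricTerm, qPochhammer_succ a, qPochhammer_succ' b,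
    qPochhammer_succ (b * q), qPochhammer_succ q, div_eq_mul_inv, mul_inv] at key ⊢
  linear_combination
    qPochhammer a q t * (1 - a * q ^ t) * qPochhammer (b * q) q t * (qPochhammer q q t)⁻¹ * key

theorem sum_range_succ_qHypergeometricTerm (a b : F) {q : F} {n : ℕ}
    (hq : ∀ t < n, q ^ (t + 1) ≠ 1) :
    ∑ t ∈ Finset.range (n + 1), qHypergeometricTerm a b q t =
      a * ∑ t ∈ Finset.range n, qHypergeometricTerm a (b * q) q t +
        qPochhammer a q n * qPochhammer (b * q) q n / qPochhammer q q n := by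
  rw [Finset.sum_range_succ', qHypergeometricTerm_zero,
    Finset.sum_congr rfl fun t ht ↦ qHypergeometricTerm_succ a b (hq t (Finset.mem_range.mp ht)),
    Finset.sum_add_distrib, ← Finset.mul_sum,
    Finset.sum_range_sub fun t ↦ qPochhammer a q t * qPochhammer (b * q) q t / qPochhammer q q t]
  simp only [qPochhammer_zero, mul_one, div_one]
  ring

theorem qChuVandermonde_special_general (a : F) {q : F} (hq₀ : q ≠ 0) {r : ℕ}
    (hq : ∀ t < r, q ^ (t + 1) ≠ 1) :
    ∑ t ∈ Finset.range (r + 1), qHypergeometricTerm a (q⁻¹ ^ r) q t = a ^ r := by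
  induction r with
  | zero => simp [qHypergeometricTerm_zero]
  | succ r ih =>
    have shift : q⁻¹ ^ (r + 1) * q = q⁻¹ ^ r := by rw [pow_succ, inv_mul_cancel_right₀ hq₀]
    have boundary : qPochhammer (q⁻¹ ^ r) q (r + 1) = 0 :=
      qPochhammer_succ_eq_zero (by rw [← mul_pow, inv_mul_cancel₀ hq₀, one_pow])
    rw [sum_range_succ_qHypergeometricTerm a _ hq, shift, boundary,
      ih fun t ht ↦ hq t (ht.trans r.lt_succ_self), mul_zero, zero_div, add_zero, pow_succ']

end Field

theorem qPoch_eq_qPochhammer (a q : K) (t : ℕ) : qPoch a q t = qPochhammer a q t := by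
  simp only [qPoch, qPochhammer, ← Finset.Ico_add_one_right_eq_Icc,
    Finset.prod_Ico_eq_prod_range, add_tsub_cancel_left, add_tsub_cancel_right]

theorem X_ne_zero : X ≠ 0 :=
  (map_ne_zero_iff _ (FaithfulSMul.algebraMap_injective _ K)).mpr (MvPolynomial.X_ne_zero 0)

theorem inv_X_pow_ne_one {n : ℕ} (hn : n ≠ 0) : X⁻¹ ^ n ≠ 1 := by
  rw [inv_pow, ne_eq, inv_eq_one]
  exact X_pow_ne_one hn

/-- For every integer `r ≥ 0`,
`∑_{t=0}^{r} ((y; x^{−1})_t · (x^{r}; x^{−1})_t / (x^{−1}; x^{−1})_t) · x^{−t} = y^{r}`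
in `K`. -/
theorem qChuVandermonde_special (r : ℕ) :
    ∑ t ∈ Finset.range (r + 1),
      (qPoch Y X⁻¹ t * qPoch (X ^ r) X⁻¹ t / qPoch X⁻¹ X⁻¹ t) * (X⁻¹) ^ t
      = Y ^ r := by
  simpa only [qPoch_eq_qPochhammer, qHypergeometricTerm, inv_inv] using
    qChuVandermonde_special_general Y (inv_ne_zero X_ne_zero)
      fun t _ ↦ inv_X_pow_ne_one t.succ_ne_zero
end

section
/- Let n ≥ 1 be an odd integer and let a, b be nonnegative integers with a + b = n. For s ∈ ℂ set g(s) = Γ*_{(n+1)/2}(s/2) · Γ*_{(n−1)/2}(s/2) / (Γ*_a(s/2) · Γ*_b(s/2)). Then for every s ∈ ℂ such that for every integer j with −1 ≤ j ≤ n + 2 neither (s − j)/2 nor (n + 1 − s − j)/2 is a nonpositive integer (so that no Gamma factor involved vanishes or has a pole), one has g(n + 1 − s) = (−1)^{((a−b)^2 − 1)/8} · g(s). (Note that a − b is odd, so ((a−b)^2 − 1)/8 is an integer.) -/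
/-- `Γ*_r(s) = ∏_{j=0}^{r−1} Γ(s − j/2)`, with `Γ*_0(s) = 1`. -/
noncomputable def GammaStar (r : ℕ) (s : ℂ) : ℂ :=
  ∏ j ∈ Finset.range r, Complex.Gamma (s - (j : ℂ) / 2)

/-!
Gamma factors whose arguments differ by an integer have a polynomial quotient. By symmetry let
`b < a`. With `k = (a - b - 1) / 2` and `c = s / 2 - (n + 1) / 4`, cancelling in `g(s)` leaves
`∏_{l=1}^{k} Γ(c + (1 + l) / 2) / Γ(c + (1 - l) / 2)`, whose `l`-th quotient is the central
factorial polynomial of degree `l` in `c`. The substitution `s ↦ n + 1 - s` is `c ↦ -c`, and central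
factorials have the parity of their degree, so the sign is `(-1)^(1 + 2 + ⋯ + k)`, where
`1 + 2 + ⋯ + k = ((a - b)^2 - 1) / 8`.
-/

section CentralFactorial

variable {K : Type*} [Field K]

/-- The central factorial `∏_{i=0}^{l-1} (c + (1 - l) / 2 + i)`, a polynomial function of degree `l`
whose roots lie symmetrically about `0`. Over `ℂ` it is the quotient
`Γ(c + (1 + l) / 2) / Γ(c + (1 - l) / 2)`. In characteristic two the division makes it junk. -/
noncomputable def centralFactorial (l : ℕ) (c : K) : K :=
  (ascPochhammer K l).eval (c + (1 - l) / 2)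

theorem centralFactorial_neg [NeZero (2 : K)] (l : ℕ) (c : K) :
    centralFactorial l (-c) = (-1) ^ l * centralFactorial l c := by
  have arg_neg : -c + (1 - l) / 2 = -(c - (1 - l) / 2) := by ring
  have arg_shift : c - (1 - l) / 2 - l + 1 = c + (1 - l) / 2 := by
    field [NeZero.ne (2 : K)]
  rw [centralFactorial, centralFactorial, arg_neg, ascPochhammer_eval_neg_eq_descPochhammer,
    descPochhammer_eval_eq_ascPochhammer, arg_shift]

/-- The product of the central factorials of degrees `1, …, k`, which is the polynomial that the
Gamma factor of a matrix of signature `(b + 2k + 1, b)` or `(b, b + 2k + 1)` reduces to. -/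
noncomputable def centralSuperfactorial (k : ℕ) (c : K) : K :=
  ∏ l ∈ Finset.range k, centralFactorial (l + 1) c

theorem centralSuperfactorial_zero (c : K) : centralSuperfactorial 0 c = 1 :=
  Finset.prod_range_zero _

theorem centralSuperfactorial_succ (k : ℕ) (c : K) :
    centralSuperfactorial (k + 1) c = centralSuperfactorial k c * centralFactorial (k + 1) c :=
  Finset.prod_range_succ _ _

theorem centralSuperfactorial_neg [NeZero (2 : K)] (k : ℕ) (c : K) :
    centralSuperfactorial k (-c) = (-1) ^ (k + 1).choose 2 * centralSuperfactorial k c := by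
  induction k with
  | zero => simp [centralSuperfactorial_zero]
  | succ k ih =>
    have choose_succ : (k + 2).choose 2 = k + 1 + (k + 1).choose 2 := by
      rw [Nat.choose_succ_succ', Nat.choose_one_right]
    rw [centralSuperfactorial_succ, centralSuperfactorial_succ, ih, centralFactorial_neg,
      choose_succ, pow_add]
    ring

end CentralFactorial

theorem odd_sq_sub_one_ediv_eight (k : ℕ) :
    ((2 * (k : ℤ) + 1) ^ 2 - 1) / 8 = ((k + 1).choose 2 : ℕ) := by
  have two_mul_choose : ((k + 1).choose 2 : ℤ) * 2 = (k + 1) * k := by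
    exact_mod_cast Nat.choose_two_right (k + 1) ▸
      Nat.div_mul_cancel (Nat.even_mul_pred_self (k + 1)).two_dvd
  apply Int.ediv_eq_of_eq_mul_left (by norm_num)
  linear_combination -4 * two_mul_choose

theorem Gamma_eq_centralFactorial_mul_Gamma (l : ℕ) (c : ℂ)
    (hc : ∀ i : ℕ, c + (1 - l) / 2 ≠ -i) :
    Complex.Gamma (c + (1 + l) / 2) =
      centralFactorial l c * Complex.Gamma (c + (1 - l) / 2) := by
  have arg_shift : c + (1 + l) / 2 = c + (1 - l) / 2 + l := by ring
  rw [centralFactorial, ← Complex.Gamma_add_nat_div_Gamma_eq _ hc,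
    div_mul_cancel₀ _ (Complex.Gamma_ne_zero hc), arg_shift]

theorem GammaStar_zero (x : ℂ) : GammaStar 0 x = 1 :=
  Finset.prod_range_zero _

theorem GammaStar_add (q r : ℕ) (x : ℂ) :
    GammaStar (q + r) x = GammaStar q x * GammaStar r (x - q / 2) := by
  simp only [GammaStar, Finset.prod_range_add, Nat.cast_add, add_div, sub_sub]

theorem GammaStar_one (x : ℂ) : GammaStar 1 x = Complex.Gamma x := by
  simp [GammaStar]

theorem GammaStar_ne_zero {r : ℕ} {x : ℂ} (hx : ∀ j < r, ∀ i : ℕ, x - (j : ℂ) / 2 ≠ -i) :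
    GammaStar r x ≠ 0 :=
  Finset.prod_ne_zero_iff.2 fun j hj => Complex.Gamma_ne_zero (hx j (Finset.mem_range.1 hj))

theorem GammaStar_eq_centralSuperfactorial_mul_GammaStar (k : ℕ) (c : ℂ)
    (hc : ∀ j < k, ∀ i : ℕ, c - (j : ℂ) / 2 ≠ -i) :
    GammaStar k (c + (k + 1) / 2) = centralSuperfactorial k c * GammaStar k c := by
  induction k with
  | zero => simp only [GammaStar_zero, centralSuperfactorial_zero, mul_one]
  | succ k ih =>
    have split_first : GammaStar (k + 1) (c + ((k + 1 : ℕ) + 1) / 2) =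
        Complex.Gamma (c + (1 + (k + 1 : ℕ)) / 2) * GammaStar k (c + (k + 1) / 2) := by
      rw [add_comm k, GammaStar_add, GammaStar_one]
      congr 2 <;> push_cast <;> ring
    have split_last : GammaStar (k + 1) c =
        GammaStar k c * Complex.Gamma (c + (1 - (k + 1 : ℕ)) / 2) := by
      rw [GammaStar_add, GammaStar_one]
      congr 2
      push_cast
      ring
    have last_ne : ∀ i : ℕ, c + (1 - (k + 1 : ℕ)) / 2 ≠ -i := by
      convert hc k k.lt_succ_self using 3
      push_cast
      ring
    rw [split_first, split_last, ih fun j hj => hc j (hj.trans k.lt_succ_self),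
      Gamma_eq_centralFactorial_mul_Gamma _ _ last_ne, centralSuperfactorial_succ]
    ring

theorem GammaStar_mul_div_mul_eq_centralSuperfactorial (b k : ℕ) (x : ℂ)
    (hx : ∀ j < b + k + 1 + k, ∀ i : ℕ, x - (j : ℂ) / 2 ≠ -i) :
    GammaStar (b + k + 1) x * GammaStar (b + k) x /
        (GammaStar (b + k + 1 + k) x * GammaStar b x) =
      centralSuperfactorial k (x - (b + k + 1) / 2) := by
  have tail_ne : ∀ j < k, ∀ i : ℕ, x - ((b + k + 1 : ℕ) : ℂ) / 2 - (j : ℂ) / 2 ≠ -i := by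
    intro j hj i
    convert hx (b + k + 1 + j) (by lia) i using 1
    push_cast
    ring
  have mid_eq : GammaStar k (x - b / 2) = centralSuperfactorial k (x - (b + k + 1) / 2) *
      GammaStar k (x - (b + k + 1 : ℕ) / 2) := by
    convert GammaStar_eq_centralSuperfactorial_mul_GammaStar k _ tail_ne using 2 <;> push_cast <;>
      ring_nf
  have hhead : GammaStar (b + k + 1) x ≠ 0 := GammaStar_ne_zero fun j hj => hx j (by lia)
  have hb : GammaStar b x ≠ 0 := GammaStar_ne_zero fun j hj => hx j (by lia)
  have htail := GammaStar_ne_zero tail_ne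
  rw [GammaStar_add b, GammaStar_add (b + k + 1), mid_eq]
  field

theorem GammaStar_mul_div_mul_reflect (b k : ℕ) {x y : ℂ} (hxy : x + y = b + k + 1)
    (hx : ∀ j < b + k + 1 + k, ∀ i : ℕ, x - (j : ℂ) / 2 ≠ -i)
    (hy : ∀ j < b + k + 1 + k, ∀ i : ℕ, y - (j : ℂ) / 2 ≠ -i) :
    GammaStar (b + k + 1) y * GammaStar (b + k) y /
        (GammaStar (b + k + 1 + k) y * GammaStar b y) =
      (-1) ^ (k + 1).choose 2 * (GammaStar (b + k + 1) x * GammaStar (b + k) x /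
        (GammaStar (b + k + 1 + k) x * GammaStar b x)) := by
  have center_neg : y - (b + k + 1) / 2 = -(x - (b + k + 1) / 2) := by
    linear_combination hxy
  rw [GammaStar_mul_div_mul_eq_centralSuperfactorial b k y hy,
    GammaStar_mul_div_mul_eq_centralSuperfactorial b k x hx, center_neg, centralSuperfactorial_neg]

/-- Lemma 3.3(1): for odd `n = a + b`, the Gamma factor
`g(s) = Γ*_{(n+1)/2}(s/2)·Γ*_{(n−1)/2}(s/2)/(Γ*_a(s/2)·Γ*_b(s/2))` satisfies
`g(n+1−s) = (−1)^{((a−b)²−1)/8}·g(s)` whenever no involved Gamma factor vanishes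
or has a pole. -/
theorem gamma_factor_FE_odd_p1 (n : ℕ) (hn : 1 ≤ n) (hodd : Odd n)
    (a b : ℕ) (hab : a + b = n) (g : ℂ → ℂ)
    (hg : ∀ s : ℂ, g s =
      GammaStar ((n + 1) / 2) (s / 2) * GammaStar ((n - 1) / 2) (s / 2) /
        (GammaStar a (s / 2) * GammaStar b (s / 2)))
    (s : ℂ)
    (hs : ∀ j : ℤ, -1 ≤ j → j ≤ (n : ℤ) + 2 → ∀ m : ℤ, m ≤ 0 →
      (s - (j : ℂ)) / 2 ≠ (m : ℂ) ∧ ((n : ℂ) + 1 - s - (j : ℂ)) / 2 ≠ (m : ℂ)) :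
    g ((n : ℂ) + 1 - s) = (-1 : ℂ) ^ ((((a : ℤ) - (b : ℤ)) ^ 2 - 1) / 8) * g s := by
  wlog hba : b ≤ a generalizing a b
  · rw [sub_sq_comm]
    exact this b a (by lia) (fun s => by rw [hg, mul_comm (GammaStar a _)]) (by lia)
  obtain ⟨m, rfl⟩ := hodd
  obtain ⟨k, rfl⟩ : ∃ k, m = b + k := ⟨m - b, by lia⟩
  obtain rfl : a = b + k + 1 + k := by lia
  have hx : ∀ j < b + k + 1 + k, ∀ i : ℕ, s / 2 - (j : ℂ) / 2 ≠ -i := fun j hj i => by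
    simpa [sub_div] using (hs j (by lia) (by lia) (-i) (by lia)).1
  have hy : ∀ j < b + k + 1 + k, ∀ i : ℕ,
      ((2 * (b + k) + 1 : ℕ) + 1 - s) / 2 - (j : ℂ) / 2 ≠ -i := fun j hj i => by
    simpa [sub_div] using (hs j (by lia) (by lia) (-i) (by lia)).2
  have hxy : s / 2 + ((2 * (b + k) + 1 : ℕ) + 1 - s) / 2 = b + k + 1 := by push_cast; ring
  have sub_eq : ((b + k + 1 + k : ℕ) : ℤ) - b = 2 * k + 1 := by lia
  rw [hg, hg, sub_eq, odd_sq_sub_one_ediv_eight, zpow_natCast,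
    show (2 * (b + k) + 1 + 1) / 2 = b + k + 1 by lia,
    show (2 * (b + k) + 1 - 1) / 2 = b + k by lia]
  exact GammaStar_mul_div_mul_reflect b k hxy hx hy
end

section
/- Let n ≥ 2 be an even integer and let a, b be nonnegative integers with a + b = n. For s ∈ ℂ define g₁(s) = Γ*_{n/2}(s/2)² / (Γ*_a(s/2) · Γ*_b(s/2)) if n/2 − a is even, and g₁(s) = Γ*_{n/2+1}(s/2) · Γ*_{n/2−1}(s/2) / (Γ*_a(s/2) · Γ*_b(s/2)) if n/2 − a is odd. Then for every s ∈ ℂ such that for every integer j with −1 ≤ j ≤ n + 2 neither (s − j)/2 nor (n + 1 − s − j)/2 is a nonpositive integer (so that no Gamma factor involved vanishes or has a pole), one has g₁(n + 1 − s) = g₁(s). -/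
/-!
Put `n = a + b` and `z' = (n + 1) / 2 - z`. Reversing the order of the factors of `Γ*_b(z')` turns
them into the `Γ(1 - (z - i/2))` with `a ≤ i < n`, so
`Γ*_n(z) Γ*_b(z') = Γ*_a(z) ∏_{a ≤ i < n} Γ(z - i/2) Γ(1 - (z - i/2))`. By the reflection formula
`Γ(w) Γ(1 - w)` changes sign under `w ↦ w - 1`, so the product of two consecutive factors depends
only on the parity of `i`. Hence, for even `n`, the ratio of `Γ*_a(z') Γ*_b(z')` to
`Γ*_a(z) Γ*_b(z)` depends on `a` only through its parity.
-/

open Complex Finset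

section PeriodicProducts

variable {M : Type*} [CommMonoid M] {f : ℕ → M}

lemma prod_range_two_mul_add_eq_of_modEq (hf : Function.Periodic (fun i ↦ f i * f (i + 1)) 2)
    {a b : ℕ} (hab : a ≡ b [MOD 2]) (k : ℕ) :
    ∏ i ∈ range (2 * k), f (a + i) = ∏ i ∈ range (2 * k), f (b + i) := by
  induction k with
  | zero => rfl
  | succ k ih =>
    have hpair : f (a + 2 * k) * f (a + 2 * k + 1) = f (b + 2 * k) * f (b + 2 * k + 1) := by
      rw [← hf.map_mod_nat (a + 2 * k), ← hf.map_mod_nat (b + 2 * k), hab.add_right (2 * k)]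
    simp only [mul_add_one, prod_range_succ, ← add_assoc, mul_assoc, ih, hpair]

lemma prod_Ico_mul_prod_Ico_eq_of_modEq (hf : Function.Periodic (fun i ↦ f i * f (i + 1)) 2)
    {a b c d n : ℕ} (hab : a + b = n) (hcd : c + d = n) (hn : Even n) (hac : a ≡ c [MOD 2]) :
    (∏ i ∈ Ico a n, f i) * ∏ i ∈ Ico b n, f i =
      (∏ i ∈ Ico c n, f i) * ∏ i ∈ Ico d n, f i := by
  wlog hle : a ≤ c generalizing a b c d
  · exact (this hcd hab hac.symm (by omega)).symm
  obtain ⟨k, rfl⟩ : ∃ k, c = a + 2 * k := ⟨(c - a) / 2, by grind [Nat.ModEq]⟩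
  obtain rfl : b = d + 2 * k := by omega
  have had : a ≡ d [MOD 2] := by grind [Nat.ModEq]
  have hsplit (e : ℕ) (he : e + 2 * k ≤ n) :
      ∏ i ∈ Ico e n, f i =
        (∏ i ∈ range (2 * k), f (e + i)) * ∏ i ∈ Ico (e + 2 * k) n, f i := by
    rw [← prod_Ico_consecutive f (Nat.le_add_right e (2 * k)) he, prod_Ico_eq_prod_range f e,
      Nat.add_sub_cancel_left]
  rw [hsplit a (by omega), hsplit d (by omega), prod_range_two_mul_add_eq_of_modEq hf had,
    mul_left_comm, mul_assoc, mul_left_comm]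

end PeriodicProducts

section Reflection

lemma Gamma_mul_Gamma_one_sub_antiperiodic :
    Function.Antiperiodic (fun w : ℂ ↦ Gamma w * Gamma (1 - w)) 1 := fun w ↦ by
  simp only [Gamma_mul_Gamma_one_sub, mul_add_one, sin_add_pi, div_neg]

/-- The product of the factors `Γ(w) Γ(1 - w)` of the reflection formula over the points
`w = z - i/2`, `a ≤ i < n`. These are the factors that compare `Γ*` at `z` with `Γ*` at
`(n + 1) / 2 - z`. -/
noncomputable def GammaReflectionProd (a n : ℕ) (z : ℂ) : ℂ :=
  ∏ i ∈ Ico a n, Gamma (z - (i : ℂ) / 2) * Gamma (1 - (z - (i : ℂ) / 2))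

lemma gammaReflectionProd_mul_eq_of_modEq {a b c d n : ℕ} (hab : a + b = n) (hcd : c + d = n)
    (hn : Even n) (hac : a ≡ c [MOD 2]) (z : ℂ) :
    GammaReflectionProd a n z * GammaReflectionProd b n z =
      GammaReflectionProd c n z * GammaReflectionProd d n z := by
  refine prod_Ico_mul_prod_Ico_eq_of_modEq (fun i ↦ ?_) hab hcd hn hac
  have hneg (j : ℕ) := Gamma_mul_Gamma_one_sub_antiperiodic.sub_eq (z - (j : ℂ) / 2)
  have hshift (j : ℕ) : z - ((j + 2 : ℕ) : ℂ) / 2 = z - (j : ℂ) / 2 - 1 := by push_cast; ring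
  simp only [add_right_comm i 2 1, hshift, hneg, neg_mul_neg]

end Reflection

section GammaStar

variable {a b c d n r : ℕ} {z : ℂ}

lemma gammaStar_ne_zero_iff :
    GammaStar r z ≠ 0 ↔ ∀ j < r, ∀ m : ℕ, z - (j : ℂ) / 2 ≠ -m := by
  simp only [GammaStar, prod_ne_zero_iff, mem_range, ne_eq, Gamma_eq_zero_iff, not_exists]

lemma gammaStar_ne_zero_of_le (hr : r ≤ n) (hn : GammaStar n z ≠ 0) : GammaStar r z ≠ 0 :=
  gammaStar_ne_zero_iff.mpr fun j hj ↦ gammaStar_ne_zero_iff.mp hn j (hj.trans_le hr)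

lemma gammaStar_mul_gammaStar_reflect (hab : a + b = n) (z : ℂ) :
    GammaStar n z * GammaStar b (((n : ℂ) + 1) / 2 - z) =
      GammaStar a z * GammaReflectionProd a n z := by
  have hreverse : GammaStar b (((n : ℂ) + 1) / 2 - z) =
      ∏ i ∈ Ico a n, Gamma (1 - (z - (i : ℂ) / 2)) := by
    subst hab
    rw [GammaStar, prod_Ico_eq_prod_range, Nat.add_sub_cancel_left, ← prod_range_reflect]
    refine prod_congr rfl fun j hj ↦ congrArg Gamma ?_
    rw [Nat.sub_sub, Nat.cast_sub (by grind)]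
    push_cast
    ring
  rw [hreverse, GammaReflectionProd, prod_mul_distrib, GammaStar, GammaStar,
    ← prod_range_mul_prod_Ico _ (show a ≤ n by omega), mul_assoc]

lemma gammaStar_sq_mul_gammaStar_mul_gammaStar_reflect (hab : a + b = n) (z : ℂ) :
    GammaStar n z ^ 2 *
        (GammaStar a (((n : ℂ) + 1) / 2 - z) * GammaStar b (((n : ℂ) + 1) / 2 - z)) =
      GammaStar a z * GammaStar b z *
        (GammaReflectionProd a n z * GammaReflectionProd b n z) := by
  rw [sq, mul_mul_mul_comm, gammaStar_mul_gammaStar_reflect hab,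
    gammaStar_mul_gammaStar_reflect ((add_comm b a).trans hab)]
  ring

lemma gammaStar_mul_div_reflect (hab : a + b = n) (hcd : c + d = n) (hn : Even n)
    (hac : a ≡ c [MOD 2]) (hz : GammaStar n z ≠ 0)
    (hz' : GammaStar n (((n : ℂ) + 1) / 2 - z) ≠ 0) :
    GammaStar c (((n : ℂ) + 1) / 2 - z) * GammaStar d (((n : ℂ) + 1) / 2 - z) /
        (GammaStar a (((n : ℂ) + 1) / 2 - z) * GammaStar b (((n : ℂ) + 1) / 2 - z)) =
      GammaStar c z * GammaStar d z / (GammaStar a z * GammaStar b z) := by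
  have hden {w : ℂ} (hw : GammaStar n w ≠ 0) : GammaStar a w * GammaStar b w ≠ 0 :=
    mul_ne_zero (gammaStar_ne_zero_of_le (by omega) hw) (gammaStar_ne_zero_of_le (by omega) hw)
  rw [div_eq_div_iff (hden hz') (hden hz)]
  refine mul_left_cancel₀ (pow_ne_zero 2 hz) ?_
  rw [← mul_assoc, gammaStar_sq_mul_gammaStar_mul_gammaStar_reflect hcd,
    mul_left_comm (GammaStar n z ^ 2),
    gammaStar_sq_mul_gammaStar_mul_gammaStar_reflect hab,
    gammaReflectionProd_mul_eq_of_modEq hab hcd hn hac]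
  ring

end GammaStar

/-- Lemma 3.6, `g₁` part: for even `n = a + b ≥ 2`, the Gamma factor `g₁` satisfies
`g₁(n+1−s) = g₁(s)` whenever no involved Gamma factor vanishes or has a pole. -/
theorem gamma_factor_FE_even_p1 (n : ℕ) (hn : 2 ≤ n) (heven : Even n)
    (a b : ℕ) (hab : a + b = n) (g₁ : ℂ → ℂ)
    (hg_even : Even ((n : ℤ) / 2 - (a : ℤ)) → ∀ s : ℂ, g₁ s =
      GammaStar (n / 2) (s / 2) ^ 2 / (GammaStar a (s / 2) * GammaStar b (s / 2)))
    (hg_odd : ¬ Even ((n : ℤ) / 2 - (a : ℤ)) → ∀ s : ℂ, g₁ s =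
      GammaStar (n / 2 + 1) (s / 2) * GammaStar (n / 2 - 1) (s / 2) /
        (GammaStar a (s / 2) * GammaStar b (s / 2)))
    (s : ℂ)
    (hs : ∀ j : ℤ, -1 ≤ j → j ≤ (n : ℤ) + 2 → ∀ m : ℤ, m ≤ 0 →
      (s - (j : ℂ)) / 2 ≠ (m : ℂ) ∧ ((n : ℂ) + 1 - s - (j : ℂ)) / 2 ≠ (m : ℂ)) :
    g₁ ((n : ℂ) + 1 - s) = g₁ s := by
  have hz : GammaStar n (s / 2) ≠ 0 := gammaStar_ne_zero_iff.mpr fun j hj m ↦ by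
    simpa [sub_div] using (hs j (by omega) (by omega) (-m) (by omega)).1
  have hz' : GammaStar n (((n : ℂ) + 1) / 2 - s / 2) ≠ 0 :=
    gammaStar_ne_zero_iff.mpr fun j hj m ↦ by
      simpa [sub_div] using (hs j (by omega) (by omega) (-m) (by omega)).2
  by_cases hpar : Even ((n : ℤ) / 2 - (a : ℤ))
  · rw [hg_even hpar, hg_even hpar, sub_div, sq, sq]
    exact gammaStar_mul_div_reflect hab (by grind) heven (by grind [Nat.ModEq]) hz hz'
  · rw [hg_odd hpar, hg_odd hpar, sub_div]
    exact gammaStar_mul_div_reflect hab (by grind) heven (by grind [Nat.ModEq]) hz hz'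
end
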